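/- There is a universal constant C > 0 such that the following holds. Let t, n, k, K be positive integers with K ≤ n/64, let f_1, …, f_n : {0,1}^t → {0,1}, and let X, Y be symmetric, perfectly k-wise indistinguishable probability distributions on {0,1}^{t·n}. Write X = X_1⋯X_n and Y = Y_1⋯Y_n where each block X_i, Y_i consists of t bits, and define the distributions X' = (f_1(X_1),…,f_n(X_n)) and Y' = (f_1(Y_1),…,f_n(Y_n)) on {0,1}^n. Then there exist probability distributions A and B on {0,1}^n that are perfectly K-wise indistinguishable and satisfy TV(X', A) ≤ δ and TV(Y', B) ≤ δ, where δ = C·(tK)^{3/2}·n^K·exp(−k²/(1156·t·K)) and TV denotes total variation distance. -/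

import Mathlib

open Finset

variable {ι : Type*} [Fintype ι] [DecidableEq ι]

/-- Hamming weight of a Boolean string. -/
def wt (x : ι → Bool) : ℕ := (Finset.univ.filter (fun i => x i = true)).card

/-- `μ` is a probability distribution on `{0,1}^ι`. -/
def IsProb (μ : (ι → Bool) → ℝ) : Prop :=
  (∀ x, 0 ≤ μ x) ∧ ∑ x : ι → Bool, μ x = 1

/-- `μ` is symmetric: `μ x` depends only on the Hamming weight of `x`. -/
def SymmDist (μ : (ι → Bool) → ℝ) : Prop := ∀ x y, wt x = wt y → μ x = μ y

/-- The probability, under `μ`, of agreeing with `z` on the coordinates in `S`;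
this describes the marginal distribution `μ|_S`. -/
def marg (μ : (ι → Bool) → ℝ) (S : Finset ι) (z : ι → Bool) : ℝ :=
  ∑ x : ι → Bool, if ∀ i ∈ S, x i = z i then μ x else 0

/-- Perfect `k`-wise indistinguishability: equality of all marginals on sets of
size at most `k`. -/
def PerfIndist (μ ν : (ι → Bool) → ℝ) (k : ℕ) : Prop :=
  ∀ S : Finset ι, S.card ≤ k → ∀ z, marg μ S z = marg ν S z

/-- The distribution of `(f_1(X_1), …, f_n(X_n))` where `X = X_1 ⋯ X_n ∼ μ` is a
distribution on `t·n` bits split into `n` blocks of `t` bits. -/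
def push {t n : ℕ} (f : Fin n → (Fin t → Bool) → Bool)
    (μ : (Fin n × Fin t → Bool) → ℝ) (z : Fin n → Bool) : ℝ :=
  ∑ x : Fin n × Fin t → Bool, if ∀ i, f i (fun j => x (i, j)) = z i then μ x else 0

/-- Total variation distance between two distributions on `{0,1}^n`. -/
noncomputable def TV {n : ℕ} (P Q : (Fin n → Bool) → ℝ) : ℝ := (∑ z : Fin n → Bool, |P z - Q z|) / 2

/-!
Under a symmetric distribution, the expectation of a test `G` depending on `M` coordinates is the
expectation of a polynomial of degree at most `M` in the Hamming weight: conditioned on weight `w`,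
the number of ones among the `M` coordinates is hypergeometric. `k`-wise indistinguishability
makes the moments of the weight agree up to order `k`, so only the part of degree above `k`
in the Chebyshev expansion of this polynomial on `[0, N]` distinguishes `X` from `Y`. The expansion
coefficients decay geometrically because the polynomial stays small on a Bernstein ellipse: a
product of binomial coefficients at a complex argument is controlled by a Cauchy estimate on
circles, and Stirling's formula compares the result with the normalising `N.choose M`. Optimising
the ellipse gives the Gaussian factor `exp (-c * k ^ 2 / M)`.

Applied to the Walsh characters of at most `K` blocks, this shows that the low-degree Walsh
coefficients of the two pushforwards nearly agree. Moving each pushforward half of the way makes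
them agree exactly, and mixing with a little of the uniform distribution restores nonnegativity.
-/

section BinomialCoefficients

open Complex

lemma norm_add_ofReal_le_self_iff {z : ℂ} {r : ℝ} (hr : 0 ≤ r) :
    ‖z + r‖ ≤ r ↔ ‖z‖ ^ 2 ≤ -(2 * r * z.re) := by
  rw [← sq_le_sq₀ (norm_nonneg _) hr, ← normSq_eq_norm_sq, ← normSq_eq_norm_sq, normSq_add]
  simp only [conj_ofReal, re_mul_ofReal, normSq_ofReal]
  constructor <;> intro h <;> linarith

lemma re_log_one_add_le {e : ℂ} (he : 1 + e ≠ 0) : (log (1 + e)).re ≤ e.re + ‖e‖ ^ 2 / 2 := by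
  have hlog := Real.log_le_sub_one_of_pos (pow_pos (norm_pos_iff.mpr he) 2)
  have hsq : ‖1 + e‖ ^ 2 = 1 + 2 * e.re + ‖e‖ ^ 2 := by
    rw [← normSq_eq_norm_sq, ← normSq_eq_norm_sq, normSq_add]
    simp only [map_one, one_mul, conj_re]
    ring
  rw [Real.log_pow, hsq, Nat.cast_ofNat] at hlog
  rw [log_re]
  linarith

/- Writing `1 + y = (1 + ρ) * (1 + e)`, the point `e` lies in the disc of diameter
`[-2ρ / (1 + ρ), 0]`; the logarithm maps this disc into a slightly larger one tangent at `0`. -/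
lemma norm_log_one_add_sub_le {ρ : ℝ} (hρ : ρ ≤ 1 / 3) {y : ℂ} (hy : ‖y‖ ≤ ρ) :
    ‖log (1 + y) - Real.log (1 + ρ) + (9 / 4 * ρ : ℝ)‖ ≤ 9 / 4 * ρ := by
  have hρ0 : 0 ≤ ρ := (norm_nonneg y).trans hy
  have h1ρ : 0 < 1 + ρ := by linarith
  have h1ρ' : ((1 + ρ : ℝ) : ℂ) ≠ 0 := ofReal_ne_zero.mpr h1ρ.ne'
  set e : ℂ := (y - ρ) / (1 + ρ : ℝ)
  have hfactor : 1 + y = (1 + ρ : ℝ) * (1 + e) := by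
    simp only [e, mul_add, mul_div_cancel₀ _ h1ρ']
    push_cast
    ring
  have he_disc : ‖e + (ρ / (1 + ρ) : ℝ)‖ ≤ ρ / (1 + ρ) := by
    have : e + (ρ / (1 + ρ) : ℝ) = y / (1 + ρ : ℝ) := by
      rw [ofReal_div, ← add_div, sub_add_cancel]
    rw [this, norm_div, Complex.norm_of_nonneg h1ρ.le]
    gcongr
  have he_sq : (1 + ρ) * ‖e‖ ^ 2 ≤ -(2 * ρ * e.re) := by
    have h := (norm_add_ofReal_le_self_iff (by positivity)).mp he_disc
    calc (1 + ρ) * ‖e‖ ^ 2 ≤ (1 + ρ) * -(2 * (ρ / (1 + ρ)) * e.re) := by gcongr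
      _ = -(2 * ρ * e.re) := by field_simp
  have he_half : ‖e‖ ≤ 1 / 2 := by
    rw [norm_div, Complex.norm_of_nonneg h1ρ.le, div_le_iff₀ h1ρ]
    have := norm_sub_le y ρ
    rw [Complex.norm_of_nonneg hρ0] at this
    linarith
  have he_ne : 1 + e ≠ 0 := by
    intro h
    rw [eq_neg_of_add_eq_zero_right h, norm_neg, norm_one] at he_half
    norm_num at he_half
  have hlog : log (1 + y) - Real.log (1 + ρ) = log (1 + e) := by
    rw [hfactor, log_ofReal_mul h1ρ he_ne, add_sub_cancel_left]
  rw [hlog, norm_add_ofReal_le_self_iff (by positivity)]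
  have hre := mul_le_mul_of_nonneg_left (re_log_one_add_le he_ne) hρ0
  have hnorm := pow_le_pow_left₀ (norm_nonneg _) (norm_log_one_add_half_le_self he_half) 2
  linarith

lemma norm_one_add_cpow_le {ρ : ℝ} (hρ : ρ ≤ 1 / 3) {y : ℂ} (hy : ‖y‖ ≤ ρ) (w : ℂ) :
    ‖(1 + y) ^ w‖ ≤ (1 + ρ) ^ w.re * Real.exp (9 / 4 * ρ * (‖w‖ - w.re)) := by
  have hne : 1 + y ≠ 0 := slitPlane_ne_zero (mem_slitPlane_of_norm_lt_one (by linarith))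
  have h1ρ : 0 < 1 + ρ := by linarith [norm_nonneg y]
  set ℓ := log (1 + y) - Real.log (1 + ρ) + (9 / 4 * ρ : ℝ)
  have hsplit : (log (1 + y) * w).re =
      Real.log (1 + ρ) * w.re + (ℓ * w).re - 9 / 4 * ρ * w.re := by
    rw [← re_ofReal_mul, ← re_ofReal_mul, ← add_re, ← sub_re]
    congr 1
    ring
  have hℓ : (ℓ * w).re ≤ 9 / 4 * ρ * ‖w‖ :=
    calc (ℓ * w).re ≤ ‖ℓ * w‖ := re_le_norm _
      _ = ‖ℓ‖ * ‖w‖ := norm_mul _ _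
      _ ≤ 9 / 4 * ρ * ‖w‖ := by gcongr; exact norm_log_one_add_sub_le hρ hy
  rw [cpow_def_of_ne_zero hne, norm_exp, Real.rpow_def_of_pos h1ρ, ← Real.exp_add, hsplit,
    Real.exp_le_exp]
  linarith

lemma iteratedDeriv_one_add_cpow_zero (w : ℂ) (j : ℕ) :
    iteratedDeriv j (fun y : ℂ => (1 + y) ^ w) 0 = j.factorial * Ring.choose w j := by
  have h := (one_add_cpow_hasFPowerSeriesOnBall_zero (a := w)).factorial_smul 1 j
  rw [iteratedDeriv_eq_iteratedFDeriv, ← h, binomialSeries_apply]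
  simp

/- Cauchy's estimate for the binomial series of `(1 + y) ^ w` on the circle `‖y‖ = ρ`. -/
lemma norm_choose_le {ρ : ℝ} (hρ0 : 0 < ρ) (hρ : ρ ≤ 1 / 3) (w : ℂ) (j : ℕ) :
    ‖Ring.choose w j‖ ≤ (1 + ρ) ^ w.re * Real.exp (9 / 4 * ρ * (‖w‖ - w.re)) / ρ ^ j := by
  have hdiff : DiffContOnCl ℂ (fun y : ℂ => (1 + y) ^ w) (Metric.ball 0 ρ) := by
    refine DifferentiableOn.diffContOnCl fun y hy => ?_
    rw [closure_ball _ hρ0.ne', mem_closedBall_zero_iff] at hy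
    have hslit : 1 + y ∈ slitPlane := mem_slitPlane_of_norm_lt_one (by linarith)
    exact (((differentiableAt_id (x := y)).const_add 1).cpow_const hslit).differentiableWithinAt
  have hcauchy := norm_iteratedDeriv_le_of_forall_mem_sphere_norm_le j hρ0 hdiff
    fun y hy => norm_one_add_cpow_le hρ (mem_sphere_zero_iff_norm.mp hy).le w
  rw [iteratedDeriv_one_add_cpow_zero, norm_mul, norm_natCast, mul_div_assoc] at hcauchy
  exact le_of_mul_le_mul_left hcauchy (by positivity)

end BinomialCoefficients

section BernsteinEllipse

open Complex

lemma sq_norm_cos_add_sq_norm_sin (z : ℂ) :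
    ‖cos z‖ ^ 2 + ‖sin z‖ ^ 2 = Real.cosh (2 * z.im) := by
  apply ofReal_injective
  push_cast
  rw [← mul_conj', ← mul_conj', ← cos_conj, ← sin_conj, ← cos_sub, sub_conj,
    cos_mul_I]
  push_cast
  rfl

/- The points `cos θ` with fixed `|im θ|` form an ellipse with foci `±1`. -/
lemma norm_one_add_cos_add_norm_one_sub_cos (θ : ℂ) :
    ‖1 + cos θ‖ + ‖1 - cos θ‖ = 2 * Real.cosh θ.im := by
  have hadd : 1 + cos θ = 2 * cos (θ / 2) ^ 2 := by rw [cos_sq]; ring_nf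
  have hsub : 1 - cos θ = 2 * sin (θ / 2) ^ 2 := by rw [sin_sq, cos_sq]; ring_nf
  have h := sq_norm_cos_add_sq_norm_sin (θ / 2)
  rw [hadd, hsub, norm_mul, norm_mul, norm_pow, norm_pow, ← mul_add, h, Complex.norm_two]
  congr 2
  simp only [div_ofNat_im]
  ring

end BernsteinEllipse

section ChebyshevExpansion

open Complex Polynomial Polynomial.Chebyshev

lemma exists_eq_sum_smul_chebyshev_T {q : ℂ[X]} {M : ℕ} (hq : q.natDegree ≤ M) :
    ∃ c : ℕ → ℂ, q = ∑ d ∈ range (M + 1), c d • T ℂ d := by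
  have hmem : q ∈ degreeLT ℂ (M + 1) := by
    rw [mem_degreeLT]
    exact (degree_le_of_natDegree_le hq).trans_lt (by exact_mod_cast M.lt_succ_self)
  rw [← Sequence.span_degreeLT (chebyshevTsequence ℂ) (by simp),
    show Set.Iio (M + 1) = Finset.range (M + 1) by simp,
    Submodule.mem_span_image_finset_iff_exists_fun'] at hmem
  obtain ⟨c, hc⟩ := hmem
  exact ⟨c, hc.symm⟩

lemma integral_exp_int_mul_I (m : ℤ) :
    ∫ x in (0 : ℝ)..(2 * Real.pi), exp (m * I * x) = if m = 0 then (2 * Real.pi : ℂ) else 0 := by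
  split_ifs with hm
  · simp [hm]
  · have hexp : exp (m * I * (2 * Real.pi : ℝ)) = 1 :=
      exp_eq_one_iff.mpr ⟨m, by push_cast; ring⟩
    rw [integral_exp_mul_complex (by simp [hm]), hexp]
    simp

lemma exp_neg_mul_cos_shift (d d' : ℕ) (b x : ℝ) :
    exp (-d * I * x) * cos (d' * (x - b * I)) =
      exp (d' * b) / 2 * exp ((d' - d : ℤ) * I * x) +
        exp (-(d' * b)) / 2 * exp ((-d' - d : ℤ) * I * x) := by
  rw [cos, mul_div_assoc', mul_add, add_div, mul_div_right_comm, ← mul_div_right_comm,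
    div_mul_eq_mul_div, div_mul_eq_mul_div, ← exp_add, ← exp_add, ← exp_add, ← exp_add]
  congr 3 <;> push_cast <;> ring_nf <;> rw [I_sq] <;> ring

lemma integral_exp_neg_mul_cos_shift {d : ℕ} (hd : d ≠ 0) (d' : ℕ) (b : ℝ) :
    ∫ x in (0 : ℝ)..(2 * Real.pi), exp (-d * I * x) * cos (d' * (x - b * I)) =
      if d' = d then (Real.pi * Real.exp (d * b) : ℂ) else 0 := by
  have hne : (-d' - d : ℤ) ≠ 0 := by omega
  have hiff : (d' - d : ℤ) = 0 ↔ d' = d := by omega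
  simp_rw [exp_neg_mul_cos_shift]
  rw [intervalIntegral.integral_add (Continuous.intervalIntegrable (by fun_prop) _ _)
      (Continuous.intervalIntegrable (by fun_prop) _ _),
    intervalIntegral.integral_const_mul, intervalIntegral.integral_const_mul,
    integral_exp_int_mul_I, integral_exp_int_mul_I, if_neg hne, mul_zero, add_zero]
  simp only [hiff]
  split_ifs with h
  · rw [h]
    push_cast
    ring
  · simp

lemma norm_coeff_le_of_norm_sum_cos_le {M : ℕ} {c : ℕ → ℂ} {b B : ℝ}
    (h : ∀ a : ℝ, ‖∑ d ∈ range (M + 1), c d * cos (d * (a - b * I))‖ ≤ B)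
    {d : ℕ} (hd : d ≠ 0) (hdM : d ≤ M) : ‖c d‖ ≤ 2 * B * Real.exp (-(d * b)) := by
  have hcoeff : ∫ x in (0 : ℝ)..(2 * Real.pi),
      exp (-d * I * x) * ∑ d' ∈ range (M + 1), c d' * cos (d' * (x - b * I)) =
        c d * (Real.pi * Real.exp (d * b)) := by
    simp_rw [mul_sum, mul_left_comm (exp _)]
    rw [intervalIntegral.integral_finsetSum
      fun i _ => Continuous.intervalIntegrable (by fun_prop) _ _]
    simp_rw [intervalIntegral.integral_const_mul, integral_exp_neg_mul_cos_shift hd]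
    simp [Nat.lt_succ_of_le hdM]
  have hbound : ‖c d * (Real.pi * Real.exp (d * b))‖ ≤ B * |2 * Real.pi - 0| := by
    rw [← hcoeff]
    refine intervalIntegral.norm_integral_le_of_norm_le_const fun x _ => ?_
    rw [norm_mul, norm_exp]
    simpa using h x
  rw [sub_zero, abs_of_pos (by positivity), ← ofReal_mul, norm_mul,
    Complex.norm_of_nonneg (by positivity)] at hbound
  rw [Real.exp_neg, ← div_eq_mul_inv, le_div_iff₀ (Real.exp_pos _)]
  exact le_of_mul_le_mul_left (by linarith) Real.pi_pos

lemma norm_chebyshev_coeff_le_of_norm_eval_cos_le {M : ℕ} {c : ℕ → ℂ} {b B : ℝ}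
    (h : ∀ a : ℝ, ‖(∑ d ∈ range (M + 1), c d • T ℂ d).eval (cos (a - b * I))‖ ≤ B)
    {d : ℕ} (hd : d ≠ 0) (hdM : d ≤ M) : ‖c d‖ ≤ 2 * B * Real.exp (-(d * b)) := by
  have hT (d : ℕ) (a : ℝ) : (T ℂ d).eval (cos (a - b * I)) = cos (d * (a - b * I)) := by
    exact_mod_cast T_complex_cos (a - b * I) d
  refine norm_coeff_le_of_norm_sum_cos_le (fun a => ?_) hd hdM
  simpa only [eval_finsetSum, eval_smul, hT, smul_eq_mul] using h a

/- The Chebyshev coefficients of degree `≤ k` contribute nothing, and the others are at most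
`2 * B * exp (-(k * b))`. -/
lemma norm_sum_mul_eval_le_of_norm_eval_cos_le {α : Type*} {s : Finset α} {σ x : α → ℝ}
    (hx : ∀ w ∈ s, |x w| ≤ 1) {k M : ℕ}
    (hσ : ∀ p : ℂ[X], p.natDegree ≤ k → ∑ w ∈ s, (σ w : ℂ) * p.eval (x w : ℂ) = 0)
    {q : ℂ[X]} (hq : q.natDegree ≤ M) {b B : ℝ} (hb : 0 ≤ b)
    (hB : ∀ a : ℝ, ‖q.eval (cos (a - b * I))‖ ≤ B) :
    ‖∑ w ∈ s, (σ w : ℂ) * q.eval (x w : ℂ)‖ ≤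
      M * (2 * B * Real.exp (-(k * b))) * ∑ w ∈ s, |σ w| := by
  obtain ⟨c, rfl⟩ := exists_eq_sum_smul_chebyshev_T hq
  have hB0 : 0 ≤ B := (norm_nonneg _).trans (hB 0)
  have hterm (d : ℕ) (hd : d < M) :
      ‖c (d + 1) * ∑ w ∈ s, (σ w : ℂ) * (T ℂ (d + 1 : ℕ)).eval (x w : ℂ)‖ ≤
        2 * B * Real.exp (-(k * b)) * ∑ w ∈ s, |σ w| := by
    rcases le_or_gt (d + 1) k with hdk | hdk
    · rw [hσ _ (by rw [natDegree_T]; omega), mul_zero, norm_zero]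
      positivity
    · rw [norm_mul]
      gcongr
      · refine (norm_chebyshev_coeff_le_of_norm_eval_cos_le hB d.succ_ne_zero hd).trans ?_
        gcongr
      · refine norm_sum_le_of_le _ fun w hw => ?_
        rw [norm_mul, norm_real, Real.norm_eq_abs, ← complex_ofReal_eval_T, norm_real]
        exact mul_le_of_le_one_right (abs_nonneg _) (abs_eval_T_real_le_one _ (hx w hw))
  have hexpand : ∑ w ∈ s, (σ w : ℂ) * (∑ d ∈ range (M + 1), c d • T ℂ d).eval (x w : ℂ) =
      ∑ d ∈ range M, c (d + 1) * ∑ w ∈ s, (σ w : ℂ) * (T ℂ (d + 1 : ℕ)).eval (x w : ℂ) := by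
    simp_rw [eval_finsetSum, eval_smul, smul_eq_mul, mul_sum]
    rw [sum_comm, sum_range_succ']
    simp_rw [mul_left_comm (σ _ : ℂ), ← mul_sum]
    rw [hσ _ (by simp), mul_zero, add_zero]
  rw [hexpand]
  calc _ ≤ ∑ d ∈ range M, 2 * B * Real.exp (-(k * b)) * ∑ w ∈ s, |σ w| :=
        norm_sum_le_of_le _ fun d hd => hterm d (mem_range.mp hd)
    _ = _ := by simp [mul_assoc]

end ChebyshevExpansion

section Stirling

lemma factorial_le_exp_mul_sqrt_mul_pow {n : ℕ} (hn : n ≠ 0) :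
    (n.factorial : ℝ) ≤ Real.exp 1 * √n * (n / Real.exp 1) ^ n := by
  obtain ⟨m, rfl⟩ := Nat.exists_eq_succ_of_ne_zero hn
  have h : Stirling.stirlingSeq (m + 1) ≤ Stirling.stirlingSeq 1 :=
    Stirling.stirlingSeq'_antitone m.zero_le
  rw [Stirling.stirlingSeq_one, Stirling.stirlingSeq, div_le_iff₀ (by positivity),
    Real.sqrt_mul zero_le_two] at h
  refine h.trans_eq ?_
  field_simp

lemma add_pow_add_le_mul_choose {M P : ℕ} (hM : M ≠ 0) (hP : P ≠ 0) :
    (M + P : ℝ) ^ (M + P) ≤ 9 * √M * (M + P).choose M * (M ^ M * P ^ P) := by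
  have hsqrt : √(P : ℝ) ≤ √(2 * Real.pi * (M + P)) := by
    gcongr
    nlinarith [Real.pi_gt_three, M.cast_nonneg (α := ℝ), P.cast_nonneg (α := ℝ)]
  have hchoose : ((M + P).factorial : ℝ) = (M + P).choose M * M.factorial * P.factorial := by
    rw [Nat.choose_symm_add]
    exact_mod_cast (Nat.add_choose_mul_factorial_mul_factorial M P).symm
  have hstirling :
      √P * ((M + P) / Real.exp 1) ^ (M + P) ≤
        (M + P).choose M * (Real.exp 1 * √M * (M / Real.exp 1) ^ M) *
          (Real.exp 1 * √P * (P / Real.exp 1) ^ P) :=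
    calc √P * ((M + P) / Real.exp 1) ^ (M + P)
        ≤ √(2 * Real.pi * (M + P)) * ((M + P) / Real.exp 1) ^ (M + P) := by gcongr
      _ ≤ (M + P).factorial := by exact_mod_cast Stirling.le_factorial_stirling (M + P)
      _ ≤ _ := by
        rw [hchoose]
        gcongr
        · exact factorial_le_exp_mul_sqrt_mul_pow hM
        · exact factorial_le_exp_mul_sqrt_mul_pow hP
  have hexp : Real.exp 1 ^ 2 ≤ 9 := by nlinarith [Real.exp_one_lt_three, Real.exp_pos 1]
  calc (M + P : ℝ) ^ (M + P)
      = Real.exp 1 ^ (M + P) / √P * (√P * ((M + P) / Real.exp 1) ^ (M + P)) := by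
        rw [div_pow]
        field_simp
    _ ≤ Real.exp 1 ^ (M + P) / √P * ((M + P).choose M *
          (Real.exp 1 * √M * (M / Real.exp 1) ^ M) *
            (Real.exp 1 * √P * (P / Real.exp 1) ^ P)) := by gcongr
    _ = Real.exp 1 ^ 2 * (√M * (M + P).choose M * (M ^ M * P ^ P)) := by
        rw [pow_add, div_pow, div_pow]
        field_simp
    _ ≤ 9 * (√M * (M + P).choose M * (M ^ M * P ^ P)) := by gcongr
    _ = _ := by ring

lemma one_add_pow_div_pow_le_mul_choose {N M : ℕ} (hM : 0 < M) (hMN : M < N) :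
    (1 + (M / (N - M) : ℝ)) ^ N / (M / (N - M) : ℝ) ^ M ≤ 9 * √M * N.choose M := by
  obtain ⟨P, rfl⟩ := Nat.exists_eq_add_of_le hMN.le
  have hP : 0 < P := by omega
  have hsplit : (1 + (M / P : ℝ)) ^ (M + P) / (M / P : ℝ) ^ M =
      (M + P : ℝ) ^ (M + P) / (M ^ M * P ^ P) := by
    rw [one_add_div (by positivity), div_pow, div_pow, pow_add (P : ℝ), add_comm (P : ℝ)]
    field_simp
  rw [Nat.cast_add, add_sub_cancel_left, hsplit, div_le_iff₀ (by positivity)]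
  exact add_pow_add_le_mul_choose hM.ne' hP.ne'

end Stirling

section Hypergeometric

open Polynomial

/-- The polynomial `w ↦ w.choose j`. -/
noncomputable def choosePoly (j : ℕ) : ℂ[X] := C (j.factorial : ℂ)⁻¹ * descPochhammer ℂ j

lemma eval_choosePoly (j : ℕ) (w : ℂ) : (choosePoly j).eval w = Ring.choose w j := by
  rw [choosePoly, eval_mul, eval_C, Ring.choose_eq_smul, smul_eq_mul, ← aeval_eq_smeval,
    aeval_def, ← eval_map, algebraMap_int_eq, descPochhammer_map]

lemma natDegree_choosePoly_le (j : ℕ) : (choosePoly j).natDegree ≤ j :=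
  (natDegree_C_mul_le _ _).trans (descPochhammer_natDegree ℂ j).le

/-- The expectation of `g J`, where `J` is the number of marked elements in a uniformly random
`M`-subset of an `N`-set with `w ≤ N` marked elements. -/
noncomputable def hypergeomMean (N M : ℕ) (g : ℕ → ℝ) (w : ℕ) : ℝ :=
  ∑ j ∈ range (M + 1), g j * (w.choose j * (N - w).choose (M - j)) / N.choose M

/-- The polynomial that interpolates `hypergeomMean N M g` at `0, …, N`. -/
noncomputable def hypergeomPoly (N M : ℕ) (g : ℕ → ℝ) : ℂ[X] :=
  ∑ j ∈ range (M + 1),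
    C (g j / N.choose M : ℂ) * (choosePoly j * (choosePoly (M - j)).comp (C (N : ℂ) - X))

lemma natDegree_hypergeomPoly_le (N M : ℕ) (g : ℕ → ℝ) : (hypergeomPoly N M g).natDegree ≤ M := by
  refine natDegree_sum_le_of_forall_le _ _ fun j hj => (natDegree_C_mul_le _ _).trans ?_
  have hlin : (C (N : ℂ) - X).natDegree ≤ 1 := (natDegree_sub_le _ _).trans (by simp)
  calc (choosePoly j * (choosePoly (M - j)).comp (C (N : ℂ) - X)).natDegree
      ≤ (choosePoly j).natDegree + (choosePoly (M - j)).natDegree * (C (N : ℂ) - X).natDegree :=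
        natDegree_mul_le.trans (Nat.add_le_add_left natDegree_comp_le _)
    _ ≤ j + (M - j) * 1 := by gcongr <;> apply natDegree_choosePoly_le
    _ = M := by rw [mul_one, Nat.add_sub_cancel' (mem_range_succ_iff.mp hj)]

lemma eval_hypergeomPoly (N M : ℕ) (g : ℕ → ℝ) (w : ℂ) :
    (hypergeomPoly N M g).eval w =
      ∑ j ∈ range (M + 1),
        (g j / N.choose M : ℂ) * (Ring.choose w j * Ring.choose (N - w) (M - j)) := by
  simp [hypergeomPoly, eval_finsetSum, eval_choosePoly]

lemma eval_natCast_hypergeomPoly {N w : ℕ} (hw : w ≤ N) (M : ℕ) (g : ℕ → ℝ) :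
    (hypergeomPoly N M g).eval (w : ℂ) = hypergeomMean N M g w := by
  rw [eval_hypergeomPoly, hypergeomMean, ← Nat.cast_sub hw]
  push_cast [Ring.choose_natCast]
  exact sum_congr rfl fun j _ => by ring

lemma norm_choose_mul_choose_le {ρ : ℝ} (hρ0 : 0 < ρ) (hρ : ρ ≤ 1 / 3) {j M : ℕ} (hj : j ≤ M)
    (N : ℕ) (w : ℂ) :
    ‖Ring.choose w j * Ring.choose (N - w) (M - j)‖ ≤
      (1 + ρ) ^ N / ρ ^ M * Real.exp (9 / 4 * ρ * (‖w‖ + ‖N - w‖ - N)) := by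
  have hre : w.re + ((N : ℂ) - w).re = N := by simp
  have hexponent :
      9 / 4 * ρ * (‖w‖ - w.re) + 9 / 4 * ρ * (‖N - w‖ - ((N : ℂ) - w).re) =
        9 / 4 * ρ * (‖w‖ + ‖N - w‖ - N) := by
    linear_combination (-9 / 4 * ρ) * hre
  calc ‖Ring.choose w j * Ring.choose (N - w) (M - j)‖
      ≤ (1 + ρ) ^ w.re * Real.exp (9 / 4 * ρ * (‖w‖ - w.re)) / ρ ^ j *
          ((1 + ρ) ^ ((N : ℂ) - w).re *
            Real.exp (9 / 4 * ρ * (‖N - w‖ - ((N : ℂ) - w).re)) / ρ ^ (M - j)) := by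
        rw [norm_mul]
        gcongr <;> apply norm_choose_le hρ0 hρ
    _ = (1 + ρ) ^ N / ρ ^ M * Real.exp (9 / 4 * ρ * (‖w‖ + ‖N - w‖ - N)) := by
        rw [div_mul_div_comm, ← pow_add, Nat.add_sub_cancel' hj, mul_mul_mul_comm,
          ← Real.rpow_add (by positivity), ← Real.exp_add, hre, Real.rpow_natCast,
          hexponent, mul_div_right_comm]

/- The choice `ρ = M / (N - M)` minimises `(1 + ρ) ^ N / ρ ^ M`, and Stirling's formula compares
the minimum with `N.choose M`. -/
lemma norm_choose_mul_choose_le_mul_choose {N M j : ℕ} (hM : 0 < M) (hMN : 4 * M ≤ N)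
    (hj : j ≤ M) (w : ℂ) :
    ‖Ring.choose w j * Ring.choose (N - w) (M - j)‖ ≤
      9 * √M * N.choose M * Real.exp (3 * M * ((‖w‖ + ‖N - w‖) / N - 1)) := by
  have hN : (0 : ℝ) < N := by exact_mod_cast (by omega : 0 < N)
  have hMN' : (4 * M : ℝ) ≤ N := by exact_mod_cast hMN
  have hNM : (0 : ℝ) < N - M := by linarith
  set ρ : ℝ := M / (N - M) with hρ
  have hρ0 : 0 < ρ := by positivity
  have hρ3 : ρ ≤ 1 / 3 := by rw [hρ, div_le_iff₀ hNM]; linarith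
  have hρN : 9 / 4 * ρ * N ≤ 3 * M := by
    rw [hρ, mul_div_assoc', div_mul_eq_mul_div, div_le_iff₀ hNM]
    nlinarith
  have hellipse : 0 ≤ (‖w‖ + ‖N - w‖) / N - 1 := by
    rw [sub_nonneg, one_le_div hN]
    simpa using norm_add_le w (N - w)
  calc ‖Ring.choose w j * Ring.choose (N - w) (M - j)‖
      ≤ (1 + ρ) ^ N / ρ ^ M * Real.exp (9 / 4 * ρ * (‖w‖ + ‖N - w‖ - N)) :=
        norm_choose_mul_choose_le hρ0 hρ3 hj N w
    _ = (1 + ρ) ^ N / ρ ^ M * Real.exp (9 / 4 * ρ * N * ((‖w‖ + ‖N - w‖) / N - 1)) := by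
        rw [mul_assoc _ (N : ℝ), mul_sub_one, mul_div_cancel₀ _ hN.ne']
    _ ≤ 9 * √M * N.choose M * Real.exp (3 * M * ((‖w‖ + ‖N - w‖) / N - 1)) := by
        gcongr
        exact one_add_pow_div_pow_le_mul_choose hM (by omega)

lemma norm_eval_hypergeomPoly_le {N M : ℕ} (hM : 0 < M) (hMN : 4 * M ≤ N) {g : ℕ → ℝ}
    (hg : ∀ j, |g j| ≤ 1) (w : ℂ) :
    ‖(hypergeomPoly N M g).eval w‖ ≤
      (M + 1) * (9 * √M * Real.exp (3 * M * ((‖w‖ + ‖N - w‖) / N - 1))) := by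
  have hchoose : (0 : ℝ) < N.choose M := by exact_mod_cast Nat.choose_pos (by omega)
  set R := 9 * √M * Real.exp (3 * M * ((‖w‖ + ‖N - w‖) / N - 1)) with hR
  have hterm (j : ℕ) (hj : j ≤ M) :
      ‖(g j / N.choose M : ℂ) * (Ring.choose w j * Ring.choose (N - w) (M - j))‖ ≤ R := by
    have hchooses := norm_choose_mul_choose_le_mul_choose hM hMN hj w
    rw [mul_right_comm, ← hR] at hchooses
    rw [norm_mul, norm_div, Complex.norm_natCast, Complex.norm_real, Real.norm_eq_abs]
    calc |g j| / N.choose M * ‖Ring.choose w j * Ring.choose (N - w) (M - j)‖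
        ≤ 1 / N.choose M * (R * N.choose M) := by gcongr; exact hg j
      _ = R := by field_simp
  rw [eval_hypergeomPoly]
  refine (norm_sum_le_of_le _ fun j hj => hterm j (mem_range_succ_iff.mp hj)).trans_eq ?_
  simp

lemma norm_eval_hypergeomPoly_cos_le {N M : ℕ} (hM : 0 < M) (hMN : 4 * M ≤ N) {g : ℕ → ℝ}
    (hg : ∀ j, |g j| ≤ 1) (θ : ℂ) :
    ‖(hypergeomPoly N M g).eval (N / 2 * (1 + Complex.cos θ))‖ ≤
      (M + 1) * (9 * √M * Real.exp (3 * M * (Real.cosh θ.im - 1))) := by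
  have hN : (N : ℝ) ≠ 0 := by exact_mod_cast (by omega : N ≠ 0)
  have hcompl : (N : ℂ) - N / 2 * (1 + Complex.cos θ) = N / 2 * (1 - Complex.cos θ) := by ring
  have hellipse :
      (‖(N / 2 * (1 + Complex.cos θ) : ℂ)‖ + ‖(N - N / 2 * (1 + Complex.cos θ) : ℂ)‖) / N =
        Real.cosh θ.im := by
    rw [hcompl, norm_mul, norm_mul, ← mul_add, norm_one_add_cos_add_norm_one_sub_cos, norm_div,
      Complex.norm_natCast, Complex.norm_two]
    field_simp
  rw [← hellipse]
  exact norm_eval_hypergeomPoly_le hM hMN hg _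

end Hypergeometric

section Moments

open Polynomial

lemma natDegree_comp_linear_le (p : ℂ[X]) (a b : ℂ) :
    (p.comp (C a * X + C b)).natDegree ≤ p.natDegree :=
  natDegree_comp_le.trans (mul_le_of_le_one_right' natDegree_linear_le)

lemma sum_mul_eval_eq_zero_of_moments {α : Type*} {s : Finset α} {σ x : α → ℝ} {k : ℕ}
    (hmom : ∀ i ≤ k, ∑ w ∈ s, σ w * x w ^ i = 0) {p : ℂ[X]} (hp : p.natDegree ≤ k) :
    ∑ w ∈ s, (σ w : ℂ) * p.eval (x w : ℂ) = 0 := by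
  simp_rw [eval_eq_sum_range' (Nat.lt_succ_of_le hp), mul_sum, mul_left_comm (σ _ : ℂ)]
  rw [sum_comm]
  refine sum_eq_zero fun i hi => ?_
  have hi0 : ∑ w ∈ s, (σ w : ℂ) * (x w : ℂ) ^ i = 0 := by
    exact_mod_cast hmom i (mem_range_succ_iff.mp hi)
  rw [← mul_sum, hi0, mul_zero]

lemma cosh_sub_one_le_sq {b : ℝ} (hb : |b| ≤ 1) : Real.cosh b - 1 ≤ b ^ 2 := by
  have hb2 : b ^ 2 ≤ 1 := (sq_le_one_iff_abs_le_one b).mpr hb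
  have hexp := Real.exp_bound_div_one_sub_of_interval (x := b ^ 2 / 2) (by positivity)
    (by linarith)
  have hdiv : 1 / (1 - b ^ 2 / 2) ≤ 1 + b ^ 2 := by
    rw [div_le_iff₀ (by linarith)]
    nlinarith [sq_nonneg b]
  linarith [Real.cosh_le_exp_half_sq b]

lemma sum_mul_hypergeomMean_eq (N M : ℕ) (g σ : ℕ → ℝ) :
    ((∑ w ∈ range (N + 1), σ w * hypergeomMean N M g w : ℝ) : ℂ) =
      ∑ w ∈ range (N + 1), (σ w : ℂ) * (hypergeomPoly N M g).eval ((w : ℝ) : ℂ) := by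
  rw [Complex.ofReal_sum]
  refine sum_congr rfl fun w hw => ?_
  rw [Complex.ofReal_mul, Complex.ofReal_natCast,
    eval_natCast_hypergeomPoly (mem_range_succ_iff.mp hw)]

lemma sum_mul_hypergeomMean_eq_zero {N M k : ℕ} (hMk : M ≤ k) (g : ℕ → ℝ) {σ : ℕ → ℝ}
    (hmom : ∀ i ≤ k, ∑ w ∈ range (N + 1), σ w * (w : ℝ) ^ i = 0) :
    ∑ w ∈ range (N + 1), σ w * hypergeomMean N M g w = 0 := by
  rw [← Complex.ofReal_eq_zero, sum_mul_hypergeomMean_eq]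
  exact sum_mul_eval_eq_zero_of_moments hmom ((natDegree_hypergeomPoly_le N M g).trans hMk)

lemma abs_sum_mul_hypergeomMean_le_of_cosh {N M k : ℕ} (hM : 0 < M) (hMN : 4 * M ≤ N) {g : ℕ → ℝ}
    (hg : ∀ j, |g j| ≤ 1) {σ : ℕ → ℝ}
    (hmom : ∀ i ≤ k, ∑ w ∈ range (N + 1), σ w * (w : ℝ) ^ i = 0) {b : ℝ} (hb : 0 ≤ b) :
    |∑ w ∈ range (N + 1), σ w * hypergeomMean N M g w| ≤
      M * (2 * ((M + 1) * (9 * √M * Real.exp (3 * M * (Real.cosh b - 1)))) *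
        Real.exp (-(k * b))) * ∑ w ∈ range (N + 1), |σ w| := by
  have hN : (0 : ℝ) < N := by exact_mod_cast (by omega : 0 < N)
  have hN' : (N : ℂ) ≠ 0 := by exact_mod_cast hN.ne'
  set q : ℂ[X] := (hypergeomPoly N M g).comp (C (N / 2 : ℂ) * X + C (N / 2 : ℂ)) with hq
  have hq_eval (z : ℂ) : q.eval z = (hypergeomPoly N M g).eval (N / 2 * (1 + z)) := by
    rw [hq, eval_comp]
    simp only [eval_add, eval_mul, eval_C, eval_X]
    ring_nf
  have hmean : ((∑ w ∈ range (N + 1), σ w * hypergeomMean N M g w : ℝ) : ℂ) =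
      ∑ w ∈ range (N + 1), (σ w : ℂ) * q.eval ((2 * w / N - 1 : ℝ) : ℂ) := by
    rw [sum_mul_hypergeomMean_eq]
    refine sum_congr rfl fun w _ => ?_
    rw [hq_eval]
    congr 2
    push_cast
    field_simp
    ring
  rw [← Real.norm_eq_abs, ← Complex.norm_real, hmean]
  refine norm_sum_mul_eval_le_of_norm_eval_cos_le (fun w hw => ?_) (fun p hp => ?_)
    ((natDegree_comp_linear_le _ _ _).trans (natDegree_hypergeomPoly_le N M g)) hb (fun a => ?_)
  · have hwN : (w : ℝ) ≤ N := by exact_mod_cast mem_range_succ_iff.mp hw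
    have h2 : 2 * (w : ℝ) / N ≤ 2 := by rw [div_le_iff₀ hN]; linarith
    have h0 : 0 ≤ 2 * (w : ℝ) / N := by positivity
    exact abs_le.mpr ⟨by linarith, by linarith⟩
  · have h := sum_mul_eval_eq_zero_of_moments hmom
      ((natDegree_comp_linear_le p (2 / N) (-1)).trans hp)
    simpa [eval_comp, sub_eq_add_neg, mul_div_right_comm] using h
  · rw [hq_eval]
    simpa using norm_eval_hypergeomPoly_cos_le hM hMN hg (a - b * Complex.I)

/- The width `b = k / (6 * M)` of the strip optimises `3 * M * b ^ 2 - k * b`. -/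
lemma abs_sum_mul_hypergeomMean_le {N M k : ℕ} (hM : 0 < M) (hMN : 4 * M ≤ N) {g : ℕ → ℝ}
    (hg : ∀ j, |g j| ≤ 1) {σ : ℕ → ℝ} (hσ : ∑ w ∈ range (N + 1), |σ w| ≤ 2)
    (hmom : ∀ i ≤ k, ∑ w ∈ range (N + 1), σ w * (w : ℝ) ^ i = 0) :
    |∑ w ∈ range (N + 1), σ w * hypergeomMean N M g w| ≤
      72 * M ^ 3 * Real.exp (-k ^ 2 / (12 * M)) := by
  rcases le_or_gt M k with hMk | hkM
  · rw [sum_mul_hypergeomMean_eq_zero hMk g hmom, abs_zero]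
    positivity
  have hM1 : (1 : ℝ) ≤ M := by exact_mod_cast hM
  have hkM' : (k : ℝ) ≤ M := by exact_mod_cast hkM.le
  have hsqrt : √(M : ℝ) ≤ M := (Real.sqrt_le_left (by positivity)).mpr (by nlinarith)
  set b : ℝ := k / (6 * M) with hb
  have hb0 : 0 ≤ b := by positivity
  have hb1 : b ≤ 1 := (div_le_one (by positivity)).mpr (by linarith)
  have hcosh : Real.cosh b - 1 ≤ b ^ 2 := cosh_sub_one_le_sq (by rwa [abs_of_nonneg hb0])
  have hexponent : 3 * M * b ^ 2 + -(k * b) = -k ^ 2 / (12 * M) := by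
    rw [hb]
    field_simp
    ring
  calc |∑ w ∈ range (N + 1), σ w * hypergeomMean N M g w|
      ≤ M * (2 * ((M + 1) * (9 * √M * Real.exp (3 * M * (Real.cosh b - 1)))) *
          Real.exp (-(k * b))) * ∑ w ∈ range (N + 1), |σ w| :=
        abs_sum_mul_hypergeomMean_le_of_cosh hM hMN hg hmom hb0
    _ ≤ M * (2 * ((M + M) * (9 * M * Real.exp (3 * M * b ^ 2))) * Real.exp (-(k * b))) * 2 := by
        gcongr
    _ = 72 * M ^ 3 * (Real.exp (3 * M * b ^ 2) * Real.exp (-(k * b))) := by ring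
    _ = 72 * M ^ 3 * Real.exp (-k ^ 2 / (12 * M)) := by rw [← Real.exp_add, hexponent]

end Moments

section Counting

lemma choose_sub_mul_choose_mul_choose {N M w j : ℕ} (hM : M ≤ N) (hj : j ≤ M) (hjw : j ≤ w)
    (hw : w ≤ N) :
    (N - M).choose (w - j) * (N.choose M * M.choose j) =
      N.choose w * (w.choose j * (N - w).choose (M - j)) := by
  rw [← mul_assoc (N.choose w), Nat.choose_mul hj, Nat.choose_mul hjw]
  rcases le_or_gt (w - j) (N - M) with h | h
  · have hsymm : (N - j).choose (w - j) = (N - j).choose (N - w) := by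
      rw [← Nat.choose_symm (by omega : w - j ≤ N - j)]
      congr 1
      omega
    have hsymm' : (N - M).choose (w - j) = (N - j - (M - j)).choose (N - w - (M - j)) := by
      rw [← Nat.choose_symm h]
      congr 1 <;> omega
    have hmul := Nat.choose_mul (n := N - j) (k := N - w) (s := M - j) (by omega)
    rw [hsymm, hsymm', mul_assoc (N.choose j), hmul]
    ring
  · rw [Nat.choose_eq_zero_of_lt h, Nat.choose_eq_zero_of_lt (by omega : N - w < M - j)]
    simp

lemma card_filter_inter_eq {T Z : Finset ι} (hZ : Z ⊆ T) {w : ℕ} (hw : #Z ≤ w) :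
    #{A ∈ univ.powersetCard w | A ∩ T = Z} = (Fintype.card ι - #T).choose (w - #Z) := by
  have hdisj {B : Finset ι} (hB : B ⊆ Tᶜ) : Disjoint B T := subset_compl_iff_disjoint_right.mp hB
  rw [← card_compl, ← card_powersetCard]
  refine card_bij' (fun A _ => A \ T) (fun B _ => B ∪ Z) (fun A hA => ?_) (fun B hB => ?_)
    (fun A hA => ?_) (fun B hB => ?_)
  · obtain ⟨hA', rfl⟩ := mem_filter.mp hA
    have hsplit := card_inter_add_card_sdiff A T
    have hAw := (mem_powersetCard.mp hA').2
    exact mem_powersetCard.mpr ⟨fun i hi => mem_compl.mpr (mem_sdiff.mp hi).2, by omega⟩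
  · obtain ⟨hBT, hBw⟩ := mem_powersetCard.mp hB
    rw [mem_filter, mem_powersetCard, card_union_of_disjoint ((hdisj hBT).mono_right hZ),
      union_inter_distrib_right, disjoint_iff_inter_eq_empty.mp (hdisj hBT), empty_union,
      inter_eq_left]
    exact ⟨⟨subset_univ _, by omega⟩, hZ⟩
  · rw [← (mem_filter.mp hA).2, sdiff_union_inter]
  · rw [union_sdiff_distrib, (hdisj (mem_powersetCard.mp hB).1).sdiff_eq_left,
      sdiff_eq_empty_iff_subset.mpr hZ, union_empty]

lemma card_filter_inter_mul_choose {T Z : Finset ι} (hZ : Z ⊆ T) (w : ℕ) :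
    #{A ∈ univ.powersetCard w | A ∩ T = Z} * ((Fintype.card ι).choose #T * (#T).choose #Z) =
      (Fintype.card ι).choose w * (w.choose #Z * (Fintype.card ι - w).choose (#T - #Z)) := by
  rcases lt_or_ge (Fintype.card ι) w with hNw | hwN
  · rw [powersetCard_eq_empty.mpr (by simpa using hNw), Nat.choose_eq_zero_of_lt hNw]
    simp
  rcases lt_or_ge w #Z with hwZ | hZw
  · have hempty : {A ∈ (univ : Finset ι).powersetCard w | A ∩ T = Z} = ∅ := by
      refine filter_eq_empty_iff.mpr fun A hA hAT => hwZ.not_ge ?_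
      rw [← hAT, ← (mem_powersetCard.mp hA).2]
      exact card_le_card inter_subset_left
    rw [hempty, Nat.choose_eq_zero_of_lt hwZ]
    simp
  · rw [card_filter_inter_eq hZ hZw]
    exact choose_sub_mul_choose_mul_choose (card_le_univ T) (card_le_card hZ) hZw hwN

end Counting

section SymmetricDistributions

/-- The Boolean string with support `A`. -/
def ofSupport (A : Finset ι) : ι → Bool := fun i => decide (i ∈ A)

lemma wt_ofSupport (A : Finset ι) : wt (ofSupport A) = #A := by
  simp [wt, ofSupport]

lemma sum_eq_sum_ofSupport {R : Type*} [AddCommMonoid R] (F : (ι → Bool) → R) :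
    ∑ x, F x = ∑ A : Finset ι, F (ofSupport A) := by
  refine (sum_bij' (fun A _ => ofSupport A) (fun x _ => univ.filter fun i => x i = true)
    ?_ ?_ ?_ ?_ ?_).symm
  all_goals simp [ofSupport, funext_iff]

/-- The `μ`-probability that the Hamming weight equals `w`. -/
def weightMass (μ : (ι → Bool) → ℝ) (w : ℕ) : ℝ := ∑ x with wt x = w, μ x

/-- The expectation of `G` under `μ`. -/
def mean (μ G : (ι → Bool) → ℝ) : ℝ := ∑ x, μ x * G x

/-- The average of `G` over the strings of weight `j` supported on `T`. -/
noncomputable def layerAverage (T : Finset ι) (G : (ι → Bool) → ℝ) (j : ℕ) : ℝ :=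
  (∑ Z ∈ T.powersetCard j, G (ofSupport Z)) / (#T).choose j

lemma abs_layerAverage_le_one {α : Type*} [DecidableEq α] {G : (α → Bool) → ℝ}
    (hG : ∀ x, |G x| ≤ 1) (T : Finset α) (j : ℕ) : |layerAverage T G j| ≤ 1 := by
  rw [layerAverage, abs_div, Nat.abs_cast]
  refine div_le_one_of_le₀ ?_ (by positivity)
  calc |∑ Z ∈ T.powersetCard j, G (ofSupport Z)|
      ≤ ∑ Z ∈ T.powersetCard j, |G (ofSupport Z)| := abs_sum_le_sum_abs _ _
    _ ≤ ∑ Z ∈ T.powersetCard j, 1 := sum_le_sum fun Z _ => hG _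
    _ = (#T).choose j := by simp

lemma weightMass_card {μ : (ι → Bool) → ℝ} (hμ : SymmDist μ) (A : Finset ι) :
    weightMass μ #A = (Fintype.card ι).choose #A * μ (ofSupport A) := by
  have hfilter : univ.filter (fun B : Finset ι => #B = #A) = univ.powersetCard #A := by
    ext B
    simp [mem_powersetCard]
  rw [weightMass, sum_filter, sum_eq_sum_ofSupport]
  simp only [wt_ofSupport]
  rw [← sum_filter, hfilter, sum_congr rfl fun B hB => hμ (ofSupport B) (ofSupport A) ?_,
    sum_const, card_powersetCard, card_univ, nsmul_eq_mul]
  rw [wt_ofSupport, wt_ofSupport, (mem_powersetCard.mp hB).2]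

lemma mean_comp_wt (μ : (ι → Bool) → ℝ) (φ : ℕ → ℝ) :
    mean μ (fun x => φ (wt x)) = ∑ w ∈ range (Fintype.card ι + 1), weightMass μ w * φ w := by
  have hwt (x : ι → Bool) : wt x ∈ range (Fintype.card ι + 1) :=
    mem_range_succ_iff.mpr (card_le_univ _)
  rw [mean, ← sum_fiberwise_of_maps_to fun x _ => hwt x]
  refine sum_congr rfl fun w _ => ?_
  rw [weightMass, sum_mul]
  exact sum_congr rfl fun x hx => by rw [(mem_filter.mp hx).2]

lemma sum_abs_weightMass {μ : (ι → Bool) → ℝ} (hμ : IsProb μ) :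
    ∑ w ∈ range (Fintype.card ι + 1), |weightMass μ w| = 1 := by
  have hmass := mean_comp_wt μ fun _ => 1
  simp only [mean, mul_one, hμ.2] at hmass
  rw [hmass]
  exact sum_congr rfl fun w _ => abs_of_nonneg (sum_nonneg fun x _ => hμ.1 x)

lemma sum_ofSupport_eq_sum_card_mul {T : Finset ι} {G : (ι → Bool) → ℝ} (hG : DependsOn G T)
    (w : ℕ) :
    ∑ A ∈ univ.powersetCard w, G (ofSupport A) =
      ∑ Z ∈ T.powerset, #{A ∈ univ.powersetCard w | A ∩ T = Z} * G (ofSupport Z) := by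
  rw [← sum_fiberwise_of_maps_to (t := T.powerset) (g := fun A => A ∩ T)
    fun A _ => mem_powerset.mpr inter_subset_right]
  refine sum_congr rfl fun Z _ => ?_
  rw [← nsmul_eq_mul, ← sum_const]
  refine sum_congr rfl fun A hA => hG fun i hi => ?_
  rw [← (mem_filter.mp hA).2]
  simp [ofSupport, mem_coe.mp hi]

lemma sum_ofSupport_eq_choose_mul_hypergeomMean {T : Finset ι} {G : (ι → Bool) → ℝ}
    (hG : DependsOn G T) (w : ℕ) :
    ∑ A ∈ univ.powersetCard w, G (ofSupport A) =
      (Fintype.card ι).choose w * hypergeomMean (Fintype.card ι) #T (layerAverage T G) w := by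
  have hT : (0 : ℝ) < (Fintype.card ι).choose #T := by
    exact_mod_cast Nat.choose_pos (card_le_univ T)
  rw [sum_ofSupport_eq_sum_card_mul hG, sum_powerset, hypergeomMean, mul_sum]
  refine sum_congr rfl fun j hj => ?_
  have hTj : (0 : ℝ) < (#T).choose j := by
    exact_mod_cast Nat.choose_pos (mem_range_succ_iff.mp hj)
  rw [layerAverage, div_mul_eq_mul_div, div_div, mul_div_assoc', eq_div_iff (by positivity),
    sum_mul, sum_mul, mul_sum]
  refine sum_congr rfl fun Z hZ => ?_
  obtain ⟨hZT, rfl⟩ := mem_powersetCard.mp hZ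
  have hcount : (#{A ∈ univ.powersetCard w | A ∩ T = Z} *
      ((Fintype.card ι).choose #T * (#T).choose #Z) : ℝ) =
        (Fintype.card ι).choose w * (w.choose #Z * (Fintype.card ι - w).choose (#T - #Z)) := by
    exact_mod_cast card_filter_inter_mul_choose hZT w
  linear_combination G (ofSupport Z) * hcount

lemma mean_eq_sum_weightMass_mul_hypergeomMean {μ : (ι → Bool) → ℝ} (hμ : SymmDist μ)
    {T : Finset ι} {G : (ι → Bool) → ℝ} (hG : DependsOn G T) :
    mean μ G = ∑ w ∈ range (Fintype.card ι + 1),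
      weightMass μ w * hypergeomMean (Fintype.card ι) #T (layerAverage T G) w := by
  rw [mean, sum_eq_sum_ofSupport, ← powerset_univ, sum_powerset, card_univ]
  refine sum_congr rfl fun w hw => ?_
  have hchoose : ((Fintype.card ι).choose w : ℝ) ≠ 0 := by
    exact_mod_cast (Nat.choose_pos (mem_range_succ_iff.mp hw)).ne'
  have hμ_layer (A : Finset ι) (hA : A ∈ univ.powersetCard w) :
      μ (ofSupport A) = weightMass μ w / (Fintype.card ι).choose w := by
    obtain ⟨-, rfl⟩ := mem_powersetCard.mp hA
    rw [weightMass_card hμ, mul_div_cancel_left₀ _ hchoose]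
  rw [sum_congr rfl fun A hA => by rw [hμ_layer A hA], ← mul_sum,
    sum_ofSupport_eq_choose_mul_hypergeomMean hG, ← mul_assoc, div_mul_cancel₀ _ hchoose]

lemma mean_wt_pow (μ : (ι → Bool) → ℝ) (i : ℕ) :
    mean μ (fun x => (wt x : ℝ) ^ i) =
      ∑ φ : Fin i → ι, marg μ (univ.image φ) (fun _ => true) := by
  simp only [mean, marg]
  rw [sum_comm]
  refine sum_congr rfl fun x _ => ?_
  have hwt : (wt x : ℝ) = ∑ a : ι, if x a = true then 1 else 0 := by simp [wt]
  rw [hwt, sum_pow', mul_sum, Fintype.piFinset_univ]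
  refine sum_congr rfl fun φ _ => ?_
  rw [prod_ite_zero]
  simp

lemma mean_wt_pow_eq_of_perfIndist {X Y : (ι → Bool) → ℝ} {k i : ℕ} (h : PerfIndist X Y k)
    (hi : i ≤ k) : mean X (fun x => (wt x : ℝ) ^ i) = mean Y (fun x => (wt x : ℝ) ^ i) := by
  rw [mean_wt_pow, mean_wt_pow]
  exact sum_congr rfl fun φ _ => h _ (card_image_le.trans (by simpa using hi)) _

lemma abs_mean_le_one {μ G : (ι → Bool) → ℝ} (hμ : IsProb μ) (hG : ∀ x, |G x| ≤ 1) :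
    |mean μ G| ≤ 1 :=
  calc |mean μ G| ≤ ∑ x, |μ x * G x| := abs_sum_le_sum_abs _ _
    _ ≤ ∑ x, μ x := sum_le_sum fun x _ => by
      rw [abs_mul, abs_of_nonneg (hμ.1 x)]
      exact mul_le_of_le_one_right (hμ.1 x) (hG x)
    _ = 1 := hμ.2

variable {X Y G : (ι → Bool) → ℝ} {k : ℕ}

lemma abs_mean_sub_mean_le_cube_mul_exp (hX : IsProb X) (hY : IsProb Y) (hXsymm : SymmDist X)
    (hYsymm : SymmDist Y) (h : PerfIndist X Y k) {T : Finset ι} (hT : 0 < #T)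
    (hTι : 4 * #T ≤ Fintype.card ι) (hG1 : ∀ x, |G x| ≤ 1) (hG : DependsOn G T) :
    |mean X G - mean Y G| ≤ 72 * #T ^ 3 * Real.exp (-k ^ 2 / (12 * #T)) := by
  rw [mean_eq_sum_weightMass_mul_hypergeomMean hXsymm hG,
    mean_eq_sum_weightMass_mul_hypergeomMean hYsymm hG, ← sum_sub_distrib]
  simp only [← sub_mul]
  refine abs_sum_mul_hypergeomMean_le hT hTι (abs_layerAverage_le_one hG1 T) ?_ fun i hi => ?_
  · refine (sum_le_sum fun w _ => abs_sub _ _).trans_eq ?_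
    rw [sum_add_distrib, sum_abs_weightMass hX, sum_abs_weightMass hY, one_add_one_eq_two]
  · have hmom := mean_wt_pow_eq_of_perfIndist h hi
    rw [mean_comp_wt X fun w => (w : ℝ) ^ i, mean_comp_wt Y fun w => (w : ℝ) ^ i] at hmom
    simp only [sub_mul]
    rw [sum_sub_distrib, hmom, sub_self]

/- The square root saved here against the previous estimate comes from `d ^ 2 ≤ 2 * d` for
`d = |mean X G - mean Y G| ≤ 2`. -/
lemma abs_mean_sub_mean_le (hX : IsProb X) (hY : IsProb Y) (hXsymm : SymmDist X)
    (hYsymm : SymmDist Y) (h : PerfIndist X Y k) {M : ℕ} (hM : 0 < M)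
    (hMι : 4 * M ≤ Fintype.card ι) {T : Finset ι} (hTM : #T ≤ M) (hG1 : ∀ x, |G x| ≤ 1)
    (hG : DependsOn G T) :
    |mean X G - mean Y G| ≤ 12 * (M : ℝ) ^ (3 / 2 : ℝ) * Real.exp (-k ^ 2 / (24 * M)) := by
  obtain ⟨U, hTU, -, rfl⟩ := exists_subsuperset_card_eq T.subset_univ hTM
    (by rw [card_univ]; omega : M ≤ #(univ : Finset ι))
  have hcube := abs_mean_sub_mean_le_cube_mul_exp hX hY hXsymm hYsymm h hM hMι hG1
    (hG.mono (coe_subset.mpr hTU))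
  have htwo : |mean X G - mean Y G| ≤ 2 := by
    linarith [abs_sub (mean X G) (mean Y G), abs_mean_le_one hX hG1, abs_mean_le_one hY hG1]
  have hsq : (12 * (#U : ℝ) ^ (3 / 2 : ℝ) * Real.exp (-k ^ 2 / (24 * #U))) ^ 2 =
      2 * (72 * #U ^ 3 * Real.exp (-k ^ 2 / (12 * #U))) := by
    rw [mul_pow, mul_pow, ← Real.rpow_mul_natCast (by positivity), ← Real.exp_nat_mul]
    norm_num
    ring_nf
  refine le_of_sq_le_sq ?_ (by positivity)
  calc |mean X G - mean Y G| ^ 2 ≤ 2 * |mean X G - mean Y G| := by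
        rw [sq]
        gcongr
    _ ≤ _ := by
        rw [hsq]
        gcongr

end SymmetricDistributions

section Walsh

/-- The sign `(-1) ^ b` of a bit `b`. -/
def boolSign (b : Bool) : ℝ := if b then -1 else 1

/-- The Walsh character `z ↦ (-1) ^ (∑ i ∈ S, z i)` of the cube; these characters form an
orthogonal basis of the real functions on `{0,1}^α`. -/
def walsh {α : Type*} (S : Finset α) (z : α → Bool) : ℝ := ∏ i ∈ S, boolSign (z i)

lemma abs_walsh {α : Type*} (S : Finset α) (z : α → Bool) : |walsh S z| = 1 := by
  rw [walsh, abs_prod]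
  refine prod_eq_one fun i _ => ?_
  cases z i <;> simp [boolSign]

lemma mean_walsh_empty (μ : (ι → Bool) → ℝ) : mean μ (walsh ∅) = ∑ z, μ z := by
  simp [mean, walsh]

lemma sum_walsh_mul_walsh (S U : Finset ι) :
    ∑ z, walsh S z * walsh U z = if S = U then (2 : ℝ) ^ Fintype.card ι else 0 := by
  let factor (i : ι) (b : Bool) : ℝ :=
    (if i ∈ S then boolSign b else 1) * (if i ∈ U then boolSign b else 1)
  have hfactor (z : ι → Bool) : walsh S z * walsh U z = ∏ i, factor i (z i) := by
    rw [prod_mul_distrib, prod_ite_mem, prod_ite_mem, univ_inter, univ_inter, walsh, walsh]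
  have hsum : ∑ z, walsh S z * walsh U z = ∏ i, ∑ b, factor i b := by
    rw [prod_univ_sum, Fintype.piFinset_univ]
    exact sum_congr rfl fun z _ => hfactor z
  have hsum_factor (i : ι) : ∑ b, factor i b = if i ∈ S ↔ i ∈ U then 2 else 0 := by
    by_cases hS : i ∈ S <;> by_cases hU : i ∈ U <;>
      simp [factor, boolSign, hS, hU, one_add_one_eq_two]
  rw [hsum, prod_congr rfl fun i _ => hsum_factor i, prod_ite_zero]
  simp [Finset.ext_iff]

lemma sum_powerset_walsh_mul_walsh {α : Type*} (S : Finset α) (x z : α → Bool) :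
    ∑ U ∈ S.powerset, walsh U z * walsh U x = if ∀ i ∈ S, x i = z i then (2 : ℝ) ^ #S else 0 := by
  classical
  have hfactor (i : α) :
      1 + boolSign (z i) * boolSign (x i) = if x i = z i then (2 : ℝ) else 0 := by
    cases x i <;> cases z i <;> norm_num [boolSign]
  simp only [walsh, ← prod_mul_distrib]
  rw [← prod_one_add, prod_congr rfl fun i _ => hfactor i, prod_ite_zero, prod_const]

lemma marg_eq_sum_mean_walsh (μ : (ι → Bool) → ℝ) (S : Finset ι) (z : ι → Bool) :
    marg μ S z = (∑ U ∈ S.powerset, walsh U z * mean μ (walsh U)) / 2 ^ #S := by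
  have hswap : ∑ U ∈ S.powerset, walsh U z * mean μ (walsh U) =
      ∑ x, μ x * ∑ U ∈ S.powerset, walsh U z * walsh U x := by
    simp only [mean, mul_sum]
    rw [sum_comm]
    simp only [mul_left_comm]
  rw [hswap, marg, sum_div]
  refine sum_congr rfl fun x _ => ?_
  rw [sum_powerset_walsh_mul_walsh]
  split_ifs <;> simp

lemma perfIndist_of_mean_walsh_eq {A B : (ι → Bool) → ℝ} {K : ℕ}
    (h : ∀ U : Finset ι, #U ≤ K → mean A (walsh U) = mean B (walsh U)) : PerfIndist A B K := by
  intro S hS z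
  rw [marg_eq_sum_mean_walsh, marg_eq_sum_mean_walsh]
  congr 1
  exact sum_congr rfl fun U hU => by rw [h U ((card_le_card (mem_powerset.mp hU)).trans hS)]

/-- The function on `{0,1}^ι` whose expectation against `walsh S` is `c S` for `S ∈ F` and zero
for `S ∉ F`. -/
noncomputable def walshSum (F : Finset (Finset ι)) (c : Finset ι → ℝ) (z : ι → Bool) : ℝ :=
  (∑ S ∈ F, c S * walsh S z) / 2 ^ Fintype.card ι

lemma abs_walshSum_le {α : Type*} [Fintype α] (F : Finset (Finset α)) (c : Finset α → ℝ)
    (z : α → Bool) : |walshSum F c z| ≤ (∑ S ∈ F, |c S|) / 2 ^ Fintype.card α := by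
  rw [walshSum, abs_div, abs_of_pos (by positivity : (0 : ℝ) < 2 ^ Fintype.card α)]
  gcongr
  exact (abs_sum_le_sum_abs _ _).trans_eq
    (sum_congr rfl fun S _ => by rw [abs_mul, abs_walsh, mul_one])

lemma mean_walshSum (F : Finset (Finset ι)) (c : Finset ι → ℝ) (U : Finset ι) :
    mean (walshSum F c) (walsh U) = if U ∈ F then c U else 0 := by
  have hterm (z : ι → Bool) : walshSum F c z * walsh U z =
      ∑ S ∈ F, c S / 2 ^ Fintype.card ι * (walsh S z * walsh U z) := by
    rw [walshSum, sum_div, sum_mul]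
    exact sum_congr rfl fun S _ => by ring
  rw [mean, sum_congr rfl fun z _ => hterm z, sum_comm]
  simp only [← mul_sum, sum_walsh_mul_walsh, mul_ite, mul_zero, sum_ite_eq']
  simp

end Walsh

section Rounding

lemma card_filter_nonempty_card_le (α : Type*) [Fintype α] (K : ℕ) :
    #{S : Finset α | S.Nonempty ∧ #S ≤ K} ≤ Fintype.card α ^ K := by
  classical
  have hsub : ({S | S.Nonempty ∧ #S ≤ K} : Finset (Finset α)) ⊆
      univ.image fun φ : Fin K → α => univ.image φ := by
    intro S hS
    obtain ⟨hne, hSK⟩ := (mem_filter.mp hS).2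
    have : Nonempty S := hne.to_subtype
    obtain ⟨e⟩ : Nonempty (S ↪ Fin K) :=
      Function.Embedding.nonempty_iff_card_le.mpr (by simpa using hSK)
    have hsurj := Function.invFun_surjective e.injective
    refine mem_image.mpr ⟨fun a => (Function.invFun e a : S), mem_univ _, ?_⟩
    ext i
    simp only [mem_image, mem_univ, true_and]
    exact ⟨by rintro ⟨a, rfl⟩; exact (Function.invFun e a).2,
      fun hi => (hsurj ⟨i, hi⟩).imp fun a ha => by rw [ha]⟩
  simpa using (card_le_card hsub).trans card_image_le

/-- The mixture of `P + c` with weight `1 / (1 + η)` and of the uniform distribution with weight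
`η / (1 + η)`. Mixing makes `P + c` nonnegative again after a correction `c` of a distribution `P`
with `|c z| ≤ η / 2 ^ Fintype.card ι`. -/
noncomputable def smoothing (η : ℝ) (P c : (ι → Bool) → ℝ) (z : ι → Bool) : ℝ :=
  (P z + c z + η / 2 ^ Fintype.card ι) / (1 + η)

lemma sum_uniform (η : ℝ) : ∑ _z : ι → Bool, η / 2 ^ Fintype.card ι = η := by
  simp [mul_div_cancel₀]

lemma mean_smoothing (η : ℝ) (P c G : (ι → Bool) → ℝ) :
    mean (smoothing η P c) G =
      (mean P G + mean c G + mean (fun _ => η / 2 ^ Fintype.card ι) G) / (1 + η) := by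
  simp only [mean, ← sum_add_distrib, sum_div]
  exact sum_congr rfl fun z _ => by rw [smoothing]; ring

lemma isProb_smoothing {η : ℝ} (hη : 0 ≤ η) {P c : (ι → Bool) → ℝ} (hP : IsProb P)
    (hc : ∀ z, |c z| ≤ η / 2 ^ Fintype.card ι) (hsum : ∑ z, c z = 0) :
    IsProb (smoothing η P c) := by
  refine ⟨fun z => div_nonneg ?_ (by positivity), ?_⟩
  · linarith [hP.1 z, (abs_le.mp (hc z)).1]
  · simp only [smoothing]
    rw [← sum_div, sum_add_distrib, sum_add_distrib, hP.2, hsum, sum_uniform, add_zero,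
      div_self (by positivity)]

lemma sum_abs_sub_smoothing_le {η : ℝ} (hη : 0 ≤ η) {P c : (ι → Bool) → ℝ} (hP : IsProb P)
    (hc : ∀ z, |c z| ≤ η / 2 ^ Fintype.card ι) :
    ∑ z, |P z - smoothing η P c z| ≤ 3 * η := by
  let u : ℝ := η / 2 ^ Fintype.card ι
  have hu : 0 ≤ u := by positivity
  have hpoint (z : ι → Bool) : |P z - smoothing η P c z| ≤ η * P z + u + u := by
    have hdiff : P z - smoothing η P c z = (η * P z - c z - u) / (1 + η) := by
      rw [smoothing, eq_div_iff (by positivity), sub_mul, div_mul_cancel₀ _ (by positivity)]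
      ring
    have hηP : 0 ≤ η * P z := mul_nonneg hη (hP.1 z)
    obtain ⟨hc_lower, hc_upper⟩ := abs_le.mp (hc z)
    rw [hdiff, abs_div, abs_of_pos (by positivity : 0 < 1 + η)]
    refine (div_le_self (abs_nonneg _) (by linarith)).trans ?_
    rw [abs_le]
    constructor <;> linarith
  calc ∑ z, |P z - smoothing η P c z| ≤ ∑ z, (η * P z + u + u) := sum_le_sum fun z _ => hpoint z
    _ = 3 * η := by
      rw [sum_add_distrib, sum_add_distrib, ← mul_sum, hP.2, sum_uniform]
      ring

theorem exists_perfIndist_of_abs_mean_walsh_sub_le {P Q : (ι → Bool) → ℝ} (hP : IsProb P)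
    (hQ : IsProb Q) {K : ℕ} {ε : ℝ} (hε : 0 ≤ ε)
    (h : ∀ S : Finset ι, #S ≤ K → |mean P (walsh S) - mean Q (walsh S)| ≤ ε) :
    ∃ A B : (ι → Bool) → ℝ, IsProb A ∧ IsProb B ∧ PerfIndist A B K ∧
      ∑ z, |P z - A z| ≤ 3 / 2 * Fintype.card ι ^ K * ε ∧
      ∑ z, |Q z - B z| ≤ 3 / 2 * Fintype.card ι ^ K * ε := by
  let F : Finset (Finset ι) := {S | S.Nonempty ∧ #S ≤ K}
  let gap (S : Finset ι) : ℝ := (mean P (walsh S) - mean Q (walsh S)) / 2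
  let η : ℝ := Fintype.card ι ^ K * (ε / 2)
  have hη : 0 ≤ η := by positivity
  have hgap_sum : ∑ S ∈ F, |gap S| ≤ η := calc
    ∑ S ∈ F, |gap S| ≤ ∑ S ∈ F, ε / 2 := sum_le_sum fun S hS => by
        rw [abs_div, abs_two]
        gcongr
        exact h S (mem_filter.mp hS).2.2
    _ = #F * (ε / 2) := by simp
    _ ≤ Fintype.card ι ^ K * (ε / 2) := by
        gcongr
        exact_mod_cast card_filter_nonempty_card_le ι K
  have hcorr (z : ι → Bool) : |walshSum F gap z| ≤ η / 2 ^ Fintype.card ι :=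
    (abs_walshSum_le F gap z).trans (by gcongr)
  have hcorr_neg (z : ι → Bool) : |(-walshSum F gap) z| ≤ η / 2 ^ Fintype.card ι := by
    simpa using hcorr z
  have hcorr_sum : ∑ z, walshSum F gap z = 0 := by
    rw [← mean_walsh_empty, mean_walshSum, if_neg (by simp [F])]
  have hη_eq : 3 * η = 3 / 2 * Fintype.card ι ^ K * ε := by ring
  refine ⟨smoothing η P (-walshSum F gap), smoothing η Q (walshSum F gap),
    isProb_smoothing hη hP hcorr_neg (by simp [hcorr_sum]), isProb_smoothing hη hQ hcorr hcorr_sum,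
    perfIndist_of_mean_walsh_eq fun U hU => ?_,
    (sum_abs_sub_smoothing_le hη hP hcorr_neg).trans_eq hη_eq,
    (sum_abs_sub_smoothing_le hη hQ hcorr).trans_eq hη_eq⟩
  have hmean_neg : mean (-walshSum F gap) (walsh U) = -mean (walshSum F gap) (walsh U) := by
    simp [mean]
  rw [mean_smoothing, mean_smoothing, hmean_neg, mean_walshSum]
  congr 2
  rcases U.eq_empty_or_nonempty with rfl | hne
  · simp [F, mean_walsh_empty, hP.2, hQ.2]
  · rw [if_pos (by simp [F, hne, hU])]
    ring

end Rounding

section Push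

variable {t n : ℕ} (f : Fin n → (Fin t → Bool) → Bool)

lemma mean_push (μ : (Fin n × Fin t → Bool) → ℝ) (φ : (Fin n → Bool) → ℝ) :
    mean (push f μ) φ = mean μ fun x => φ fun i => f i fun j => x (i, j) := by
  simp only [mean, push, sum_mul]
  rw [sum_comm]
  refine sum_congr rfl fun x _ => ?_
  simp only [← funext_iff, ite_mul, zero_mul, sum_ite_eq, mem_univ, if_true]

variable {f} in
lemma isProb_push {μ : (Fin n × Fin t → Bool) → ℝ} (hμ : IsProb μ) : IsProb (push f μ) := by
  refine ⟨fun z => sum_nonneg fun x _ => ?_, ?_⟩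
  · split_ifs
    exacts [hμ.1 x, le_rfl]
  · simpa [mean, hμ.2] using mean_push f μ fun _ => 1

lemma dependsOn_walsh_blocks (S : Finset (Fin n)) :
    DependsOn (fun x : Fin n × Fin t → Bool => walsh S fun i => f i fun j => x (i, j))
      (S ×ˢ (univ : Finset (Fin t)) : Finset (Fin n × Fin t)) := by
  intro x y hxy
  refine prod_congr rfl fun i hi => ?_
  have hblock : (fun j => x (i, j)) = fun j => y (i, j) := funext fun j => hxy (i, j) (by simp [hi])
  simp only [hblock]

end Push

theorem stmt19_general {t n k K : ℕ} (ht : 0 < t) (hK : 0 < K) (hKn : 4 * K ≤ n)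
    (f : Fin n → (Fin t → Bool) → Bool) {X Y : (Fin n × Fin t → Bool) → ℝ}
    (hX : IsProb X) (hY : IsProb Y) (hXsymm : SymmDist X) (hYsymm : SymmDist Y)
    (h : PerfIndist X Y k) :
    ∃ A B : (Fin n → Bool) → ℝ, IsProb A ∧ IsProb B ∧ PerfIndist A B K ∧
      TV (push f X) A ≤
        9 * ((t * K : ℕ) : ℝ) ^ (3 / 2 : ℝ) * n ^ K * Real.exp (-k ^ 2 / (24 * t * K)) ∧
      TV (push f Y) B ≤
        9 * ((t * K : ℕ) : ℝ) ^ (3 / 2 : ℝ) * n ^ K * Real.exp (-k ^ 2 / (24 * t * K)) := by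
  have hblocks : 4 * (t * K) ≤ Fintype.card (Fin n × Fin t) := by
    simpa [mul_assoc, mul_comm t] using Nat.mul_le_mul_right t hKn
  have hwalsh (S : Finset (Fin n)) (hS : #S ≤ K) :
      |mean (push f X) (walsh S) - mean (push f Y) (walsh S)| ≤
        12 * ((t * K : ℕ) : ℝ) ^ (3 / 2 : ℝ) * Real.exp (-k ^ 2 / (24 * (t * K : ℕ))) := by
    have hcard : #(S ×ˢ (univ : Finset (Fin t))) ≤ t * K := by
      simpa [mul_comm] using Nat.mul_le_mul_left t hS
    rw [mean_push, mean_push]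
    exact abs_mean_sub_mean_le hX hY hXsymm hYsymm h (Nat.mul_pos ht hK) hblocks hcard
      (fun x => (abs_walsh S _).le) (dependsOn_walsh_blocks f S)
  obtain ⟨A, B, hA, hB, hAB, hXA, hYB⟩ := exists_perfIndist_of_abs_mean_walsh_sub_le
    (isProb_push hX) (isProb_push hY) (by positivity) hwalsh
  rw [Fintype.card_fin, Nat.cast_mul, ← mul_assoc 24] at hXA hYB
  refine ⟨A, B, hA, hB, hAB, ?_, ?_⟩ <;> rw [TV, Nat.cast_mul] <;> linarith

theorem stmt19 :
    ∃ C : ℝ, 0 < C ∧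
      ∀ (t n k K : ℕ), 0 < t → 0 < n → 0 < k → 0 < K → (K : ℝ) ≤ (n : ℝ) / 64 →
        ∀ (f : Fin n → (Fin t → Bool) → Bool) (X Y : (Fin n × Fin t → Bool) → ℝ),
          IsProb X → IsProb Y → SymmDist X → SymmDist Y → PerfIndist X Y k →
          ∃ A B : (Fin n → Bool) → ℝ, IsProb A ∧ IsProb B ∧ PerfIndist A B K ∧
            TV (push f X) A ≤
              C * ((t * K : ℕ) : ℝ) ^ ((3 : ℝ) / 2) * (n : ℝ) ^ K *
                Real.exp (-(k : ℝ) ^ 2 / (1156 * (t : ℝ) * (K : ℝ))) ∧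
            TV (push f Y) B ≤
              C * ((t * K : ℕ) : ℝ) ^ ((3 : ℝ) / 2) * (n : ℝ) ^ K *
                Real.exp (-(k : ℝ) ^ 2 / (1156 * (t : ℝ) * (K : ℝ))) := by
  refine ⟨9, by norm_num, fun t n k K ht _ _ hK hKn f X Y hX hY hXsymm hYsymm h => ?_⟩
  have hKn' : 4 * K ≤ n := by
    have : (4 * K : ℝ) ≤ n := by linarith [(Nat.cast_nonneg K : (0 : ℝ) ≤ K)]
    exact_mod_cast this
  obtain ⟨A, B, hA, hB, hAB, hXA, hYB⟩ := stmt19_general ht hK hKn' f hX hY hXsymm hYsymm h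
  have hexp : Real.exp (-(k : ℝ) ^ 2 / (24 * t * K)) ≤ Real.exp (-k ^ 2 / (1156 * t * K)) := by
    rw [Real.exp_le_exp, neg_div, neg_div, neg_le_neg_iff]
    gcongr
    norm_num
  exact ⟨A, B, hA, hB, hAB, hXA.trans (by gcongr), hYB.trans (by gcongr)⟩
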